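/- Let ε = max_{s∈S, a∈A} |A^π(s,a)| and Δ = max_{s∈S} D_TV(π̃(·|s) ‖ π(·|s)). Then for any two policies π and π̃, | η(π̃) − η(π) − L_π(π̃) | ≤ (4 ε γ / (1−γ)²) · Δ². -/

import Mathlib

/-!
Write `Π` and `Π'` for the matrices averaging over the actions of `π` and `π'`, `T` for the
transition matrix, and `N = (1 - γ Π T)⁻¹`, `N' = (1 - γ Π' T)⁻¹` for the discounted sums of the
powers of the two state kernels. The Bellman equation gives `η(π') - η(π) = μ₀ N' Π' A^π`, while
`L_π(π') = μ₀ N Π' A^π`. The resolvent identity `N' - N = γ N' (Π' - Π) T N` and `Π A^π = 0`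
express the error as `γ μ₀ N' (Π' - Π) T N (Π' - Π) A^π`. In the `L¹-L∞` operator norm `N` and `N'`
have norm at most `1 / (1 - γ)`, and each of the two factors `Π' - Π` contributes `2 Δ`.
-/

open scoped BigOperators

namespace PolicyOpt

/-- A finite Markov decision process. -/
structure MDP (S A : Type*) [Fintype S] [Fintype A] where
  p : S → A → S → ℝ
  r : S → A → ℝ
  γ : ℝ
  μ0 : S → ℝ
  p_nonneg : ∀ s a s', 0 ≤ p s a s'
  p_sum_one : ∀ s a, ∑ s', p s a s' = 1
  μ0_nonneg : ∀ s, 0 ≤ μ0 s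
  μ0_sum_one : ∑ s, μ0 s = 1
  γ_pos : 0 < γ
  γ_lt_one : γ < 1

variable {S A : Type*} [Fintype S] [Fintype A] [DecidableEq S] [DecidableEq A]

/-- A policy assigns to every state a probability distribution over actions. -/
def IsPolicy (π : S → A → ℝ) : Prop :=
  (∀ s a, 0 ≤ π s a) ∧ ∀ s, ∑ a, π s a = 1

/-- Trajectory prefixes (histories) consisting of `t+1` state-action pairs. -/
abbrev Hist (S A : Type*) (t : ℕ) := Fin (t + 1) → S × A

/-- Probability of a history of length `t+1` when following policy `π`
starting from the initial distribution `μ0`. -/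
noncomputable def prob (M : MDP S A) (π : S → A → ℝ) (t : ℕ) (h : Hist S A t) : ℝ :=
  (M.μ0 (h 0).1 * π (h 0).1 (h 0).2) *
    ∏ i : Fin t,
      (M.p (h i.castSucc).1 (h i.castSucc).2 (h i.succ).1 * π (h i.succ).1 (h i.succ).2)

/-- Probability of a history of length `t+1` when following policy `π`,
conditioned on starting in state `s` with first action `a`. -/
noncomputable def probFrom (M : MDP S A) (π : S → A → ℝ) (s : S) (a : A) (t : ℕ) (h : Hist S A t) : ℝ :=
  (if h 0 = (s, a) then (1 : ℝ) else 0) *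
    ∏ i : Fin t,
      (M.p (h i.castSucc).1 (h i.castSucc).2 (h i.succ).1 * π (h i.succ).1 (h i.succ).2)

/-- The last state-action pair of a history. -/
def lastSA {t : ℕ} (h : Hist S A t) : S × A := h (Fin.last t)

/-- State-action value `Q^π(s,a) = E_{τ∼π}[∑_{t≥0} γ^t r(s_t,a_t) | s₀=s, a₀=a]`. -/
noncomputable def Qval (M : MDP S A) (π : S → A → ℝ) (s : S) (a : A) : ℝ :=
  ∑' t : ℕ, M.γ ^ t * ∑ h : Hist S A t, probFrom M π s a t h * M.r (lastSA h).1 (lastSA h).2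

/-- State value `V^π(s)`. -/
noncomputable def Vval (M : MDP S A) (π : S → A → ℝ) (s : S) : ℝ :=
  ∑ a, π s a * Qval M π s a

/-- Advantage `A^π(s,a) = Q^π(s,a) - V^π(s)`. -/
noncomputable def Adv (M : MDP S A) (π : S → A → ℝ) (s : S) (a : A) : ℝ :=
  Qval M π s a - Vval M π s

/-- The value `η(π) = E_{τ∼π} ∑_{t≥0} γ^t r(s_t,a_t)`. -/
noncomputable def ηval (M : MDP S A) (π : S → A → ℝ) : ℝ :=
  ∑' t : ℕ, M.γ ^ t * ∑ h : Hist S A t, prob M π t h * M.r (lastSA h).1 (lastSA h).2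

/-- Normalised discounted state occupancy measure
`d^π(s) = (1-γ) ∑_{t≥0} γ^t Pr_{τ∼π}(s_t = s)`. -/
noncomputable def dOcc (M : MDP S A) (π : S → A → ℝ) (s : S) : ℝ :=
  (1 - M.γ) * ∑' t : ℕ, M.γ ^ t *
    ∑ h : Hist S A t, prob M π t h * (if (lastSA h).1 = s then (1 : ℝ) else 0)

/-- The surrogate objective `L_π(π') = (1/(1-γ)) ∑_s d^π(s) ∑_a π'(a|s) A^π(s,a)`. -/
noncomputable def Lsur (M : MDP S A) (π π' : S → A → ℝ) : ℝ :=
  (1 - M.γ)⁻¹ * ∑ s, dOcc M π s * ∑ a, π' s a * Adv M π s a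

/-- Product of importance sampling ratios `ρ_{0:t}` along a history. -/
noncomputable def ρprod (π π' : S → A → ℝ) {t : ℕ} (h : Hist S A t) : ℝ :=
  ∏ i, π' (h i).1 (h i).2 / π (h i).1 (h i).2

/-- Smoothed product of importance sampling ratios `ρ^{α}_{0:t}`. -/
noncomputable def ρpow (π π' : S → A → ℝ) {t : ℕ} (α : Fin (t + 1) → ℝ) (h : Hist S A t) : ℝ :=
  ∏ i, (π' (h i).1 (h i).2 / π (h i).1 (h i).2) ^ (α i)

/-- The prefix of length `t+1` of a history of length `T+1` (for `t ≤ T`). -/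
def pref {T : ℕ} (h : Hist S A T) (t : Fin (T + 1)) : Hist S A (t : ℕ) :=
  fun i => h (Fin.castLE t.isLt i)

open scoped Matrix Matrix.Norms.Operator

section Potential

variable {m n : Type*} [Fintype m] [Fintype n]

lemma linfty_opNorm_le {α : Type*} [SeminormedAddCommGroup α] {B : Matrix m n α} {C : ℝ}
    (hC : 0 ≤ C) (hB : ∀ i, ∑ j, ‖B i j‖ ≤ C) : ‖B‖ ≤ C := by
  lift C to NNReal using hC
  rw [Matrix.linfty_opNorm_def, NNReal.coe_le_coe]
  refine Finset.sup_le fun i _ => NNReal.coe_le_coe.mp ?_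
  simpa only [NNReal.coe_sum, coe_nnnorm] using hB i

lemma abs_dotProduct_le_norm {p : n → ℝ} (hp : ∀ i, 0 ≤ p i) (hp_sum : ∑ i, p i = 1)
    (v : n → ℝ) : |p ⬝ᵥ v| ≤ ‖v‖ :=
  calc |p ⬝ᵥ v| ≤ ∑ i, |p i * v i| := Finset.abs_sum_le_sum_abs _ _
    _ ≤ ∑ i, p i * ‖v‖ := Finset.sum_le_sum fun i _ => by
      rw [abs_mul, abs_of_nonneg (hp i)]
      exact mul_le_mul_of_nonneg_left (norm_le_pi_norm v i) (hp i)
    _ = ‖v‖ := by rw [← Finset.sum_mul, hp_sum, one_mul]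

variable [DecidableEq n]

lemma sum_paths_eq_dotProduct_pow_mulVec {R : Type*} [CommSemiring R] (c : n → R)
    (K : Matrix n n R) (t : ℕ) (f : n → R) :
    ∑ h : Fin (t + 1) → n,
        (c (h 0) * ∏ i : Fin t, K (h i.castSucc) (h i.succ)) * f (h (Fin.last t)) =
      c ⬝ᵥ K ^ t *ᵥ f := by
  induction t generalizing f with
  | zero =>
    rw [← (Equiv.funUnique (Fin 1) n).symm.sum_comp]
    simp [dotProduct]
  | succ t ih =>
    rw [pow_succ, ← Matrix.mulVec_mulVec, ← ih,
      ← (Fin.snocEquiv fun _ : Fin (t + 2) => n).sum_comp, Fintype.sum_prod_type, Finset.sum_comm]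
    refine Finset.sum_congr rfl fun h _ => ?_
    have snoc_zero (q : n) : (Fin.snoc h q : Fin (t + 2) → n) 0 = h 0 := by
      rw [← Fin.castSucc_zero, Fin.snoc_castSucc (α := fun _ => n)]
    simp only [Fin.snocEquiv_apply, Fin.prod_univ_castSucc, snoc_zero, Fin.succ_castSucc,
      Fin.snoc_castSucc (α := fun _ => n), Fin.succ_last, Fin.snoc_last (α := fun _ => n),
      Matrix.mulVec, dotProduct, Finset.mul_sum, mul_assoc]

lemma norm_inverse_one_sub_le {R : Type*} [NormedRing R] [NormOneClass R]
    [HasSummableGeomSeries R] {x : R} (hx : ‖x‖ < 1) : ‖Ring.inverse (1 - x)‖ ≤ (1 - ‖x‖)⁻¹ := by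
  rw [← geom_series_eq_inverse x hx]
  simpa using tsum_geometric_le_of_norm_lt_one x hx

/-- The discounted potential `∑ t, γ ^ t • K ^ t` of a kernel `K`, encoded in its resolvent form;
the two agree when `‖γ • K‖ < 1`. -/
noncomputable def potential (γ : ℝ) (K : Matrix n n ℝ) : Matrix n n ℝ := (1 - γ • K)⁻¹

variable {γ : ℝ} {K K' : Matrix n n ℝ}

lemma hasSum_potential (hK : ‖γ • K‖ < 1) : HasSum (fun t => (γ • K) ^ t) (potential γ K) := by
  rw [potential, Matrix.nonsing_inv_eq_ringInverse]
  exact hasSum_geom_series_inverse _ hK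

lemma isUnit_det_one_sub (hK : ‖γ • K‖ < 1) : IsUnit (1 - γ • K).det :=
  (Matrix.isUnit_iff_isUnit_det _).mp (isUnit_one_sub_of_norm_lt_one hK)

lemma one_sub_mul_potential (hK : ‖γ • K‖ < 1) : (1 - γ • K) * potential γ K = 1 :=
  Matrix.mul_nonsing_inv _ (isUnit_det_one_sub hK)

lemma potential_mul_one_sub (hK : ‖γ • K‖ < 1) : potential γ K * (1 - γ • K) = 1 :=
  Matrix.nonsing_inv_mul _ (isUnit_det_one_sub hK)

lemma tsum_dotProduct_pow_mulVec (hK : ‖γ • K‖ < 1) (c f : n → ℝ) :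
    ∑' t : ℕ, γ ^ t * (c ⬝ᵥ K ^ t *ᵥ f) = c ⬝ᵥ potential γ K *ᵥ f := by
  have hcont : Continuous fun B : Matrix n n ℝ => c ⬝ᵥ B *ᵥ f := by fun_prop
  let φ : Matrix n n ℝ →+ ℝ :=
    { toFun := fun B => c ⬝ᵥ B *ᵥ f
      map_zero' := by simp
      map_add' := fun B B' => by rw [Matrix.add_mulVec, dotProduct_add] }
  have hsum := ((hasSum_potential hK).map φ hcont).tsum_eq
  simpa [φ, smul_pow, Matrix.smul_mulVec] using hsum

lemma norm_potential_le [Nonempty n] (hγ : 0 ≤ γ) (hγ_lt : γ < 1) (hK : ‖K‖ ≤ 1) :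
    ‖potential γ K‖ ≤ (1 - γ)⁻¹ := by
  have hγK : ‖γ • K‖ ≤ γ := by
    rw [norm_smul, Real.norm_of_nonneg hγ]
    exact mul_le_of_le_one_right hγ hK
  rw [potential, Matrix.nonsing_inv_eq_ringInverse]
  refine (norm_inverse_one_sub_le (hγK.trans_lt hγ_lt)).trans ?_
  gcongr

lemma potential_sub_potential (hK' : ‖γ • K'‖ < 1) (hK : ‖γ • K‖ < 1) :
    potential γ K' - potential γ K = γ • (potential γ K' * (K' - K) * potential γ K) := by
  have hunits : IsUnit (1 - γ • K') ↔ IsUnit (1 - γ • K) :=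
    iff_of_true (isUnit_one_sub_of_norm_lt_one hK') (isUnit_one_sub_of_norm_lt_one hK)
  rw [potential, potential, Matrix.inv_sub_inv hunits, sub_sub_sub_cancel_left, ← smul_sub,
    Matrix.mul_smul, Matrix.smul_mul]

lemma mul_potential_mul_comm [DecidableEq m] {B : Matrix m n ℝ} {D : Matrix n m ℝ}
    (hBD : ‖γ • (B * D)‖ < 1) (hDB : ‖γ • (D * B)‖ < 1) :
    B * potential γ (D * B) = potential γ (B * D) * B := by
  have intertwine : B * (1 - γ • (D * B)) = (1 - γ • (B * D)) * B := by
    simp only [Matrix.mul_sub, Matrix.sub_mul, Matrix.mul_one, Matrix.one_mul, Matrix.mul_smul,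
      Matrix.smul_mul, Matrix.mul_assoc]
  calc B * potential γ (D * B)
      = potential γ (B * D) * ((1 - γ • (B * D)) * B) * potential γ (D * B) := by
        rw [← Matrix.mul_assoc, potential_mul_one_sub hBD, Matrix.one_mul]
    _ = potential γ (B * D) * B := by
        rw [← intertwine, Matrix.mul_assoc, Matrix.mul_assoc, one_sub_mul_potential hDB,
          Matrix.mul_one]

end Potential

section Transition

omit [DecidableEq S] [DecidableEq A]

/-- The matrix whose row `(s, a)` is the distribution `p(· | s, a)` of the next state. -/
def transitionMatrix (M : MDP S A) : Matrix (S × A) S ℝ := .of fun q s' => M.p q.1 q.2 s'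

lemma norm_transitionMatrix_le (M : MDP S A) : ‖transitionMatrix M‖ ≤ 1 :=
  linfty_opNorm_le zero_le_one fun q => by
    simp [transitionMatrix, abs_of_nonneg (M.p_nonneg _ _ _), M.p_sum_one]

lemma MDP.norm_γ_smul_lt_one (M : MDP S A) {E : Type*} [SeminormedAddCommGroup E] [NormedSpace ℝ E]
    {x : E} (hx : ‖x‖ ≤ 1) : ‖M.γ • x‖ < 1 := by
  rw [norm_smul, Real.norm_of_nonneg M.γ_pos.le]
  exact (mul_le_of_le_one_right M.γ_pos.le hx).trans_lt M.γ_lt_one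

end Transition

section PolicyMatrices

omit [DecidableEq A]

/-- The matrix of the averaging operator `f ↦ (s ↦ ∑ a, ρ(a | s) f(s, a))`. The weights `ρ` may be
signed, so that differences of policies are covered. -/
def policyMatrix (ρ : S → A → ℝ) : Matrix S (S × A) ℝ :=
  .of fun s q => if q.1 = s then ρ s q.2 else 0

/-- The kernel `P(s' | s) = ∑ a, π(a | s) p(s' | s, a)` of the states visited by `π`. -/
def stateKernel (M : MDP S A) (π : S → A → ℝ) : Matrix S S ℝ :=
  policyMatrix π * transitionMatrix M

/-- The kernel `P(s', a' | s, a) = p(s' | s, a) π(a' | s')` of the state-action pairs visited by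
`π`. -/
def pairKernel (M : MDP S A) (π : S → A → ℝ) : Matrix (S × A) (S × A) ℝ :=
  transitionMatrix M * policyMatrix π

lemma policyMatrix_mulVec_apply (ρ : S → A → ℝ) (f : S × A → ℝ) (s : S) :
    (policyMatrix ρ *ᵥ f) s = ∑ a, ρ s a * f (s, a) := by
  simp [policyMatrix, Matrix.mulVec, dotProduct, Fintype.sum_prod_type_right]

omit [Fintype A] in
lemma vecMul_policyMatrix_apply (c : S → ℝ) (ρ : S → A → ℝ) (q : S × A) :
    (c ᵥ* policyMatrix ρ) q = c q.1 * ρ q.1 q.2 := by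
  simp [policyMatrix, Matrix.vecMul, dotProduct]

lemma pairKernel_apply (M : MDP S A) (π : S → A → ℝ) (q q' : S × A) :
    pairKernel M π q q' = M.p q.1 q.2 q'.1 * π q'.1 q'.2 :=
  vecMul_policyMatrix_apply (M.p q.1 q.2) π q'

omit [Fintype S] [Fintype A] in
lemma policyMatrix_sub (ρ ρ' : S → A → ℝ) :
    policyMatrix (ρ - ρ') = policyMatrix ρ - policyMatrix ρ' := by
  ext s q
  by_cases h : q.1 = s <;> simp [policyMatrix, h]

lemma norm_policyMatrix_le_of_sum_abs_le {ρ : S → A → ℝ} {C : ℝ} (hC : 0 ≤ C)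
    (hρ : ∀ s, ∑ a, |ρ s a| ≤ C) : ‖policyMatrix ρ‖ ≤ C :=
  linfty_opNorm_le hC fun s => by
    simpa [policyMatrix, Fintype.sum_prod_type_right, apply_ite] using hρ s

end PolicyMatrices

section IsPolicy

omit [DecidableEq A]

variable {π : S → A → ℝ}

lemma IsPolicy.policyMatrix_mulVec_comp_fst (hπ : IsPolicy π) (g : S → ℝ) :
    policyMatrix π *ᵥ (g ∘ Prod.fst) = g := by
  ext s
  simp [policyMatrix_mulVec_apply, ← Finset.sum_mul, hπ.2 s]

lemma IsPolicy.norm_policyMatrix_le (hπ : IsPolicy π) : ‖policyMatrix π‖ ≤ 1 :=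
  norm_policyMatrix_le_of_sum_abs_le zero_le_one fun s => by
    simp [abs_of_nonneg (hπ.1 s _), hπ.2 s]

lemma IsPolicy.norm_stateKernel_le (hπ : IsPolicy π) (M : MDP S A) : ‖stateKernel M π‖ ≤ 1 :=
  (Matrix.linfty_opNorm_mul _ _).trans <|
    mul_le_one₀ hπ.norm_policyMatrix_le (norm_nonneg _) (norm_transitionMatrix_le M)

lemma IsPolicy.norm_γ_smul_stateKernel_lt_one (hπ : IsPolicy π) (M : MDP S A) :
    ‖M.γ • stateKernel M π‖ < 1 :=
  M.norm_γ_smul_lt_one (hπ.norm_stateKernel_le M)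

end IsPolicy

section Values

variable {M : MDP S A} {π π' : S → A → ℝ}

lemma IsPolicy.norm_pairKernel_le (hπ : IsPolicy π) (M : MDP S A) : ‖pairKernel M π‖ ≤ 1 :=
  (Matrix.linfty_opNorm_mul _ _).trans <|
    mul_le_one₀ (norm_transitionMatrix_le M) (norm_nonneg _) hπ.norm_policyMatrix_le

lemma IsPolicy.norm_γ_smul_pairKernel_lt_one (hπ : IsPolicy π) (M : MDP S A) :
    ‖M.γ • pairKernel M π‖ < 1 :=
  M.norm_γ_smul_lt_one (hπ.norm_pairKernel_le M)

lemma policyMatrix_mulVec_potential (hπ : IsPolicy π) (f : S × A → ℝ) :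
    policyMatrix π *ᵥ potential M.γ (pairKernel M π) *ᵥ f =
      potential M.γ (stateKernel M π) *ᵥ policyMatrix π *ᵥ f := by
  simp only [Matrix.mulVec_mulVec]
  rw [pairKernel, stateKernel, mul_potential_mul_comm (hπ.norm_γ_smul_stateKernel_lt_one M)
    (hπ.norm_γ_smul_pairKernel_lt_one M)]

lemma sum_prob_mul_lastSA (M : MDP S A) (π : S → A → ℝ) (t : ℕ) (f : S × A → ℝ) :
    ∑ h : Hist S A t, prob M π t h * f (lastSA h) =
      (M.μ0 ᵥ* policyMatrix π) ⬝ᵥ pairKernel M π ^ t *ᵥ f := by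
  rw [← sum_paths_eq_dotProduct_pow_mulVec]
  simp only [vecMul_policyMatrix_apply, pairKernel_apply, prob, lastSA]

lemma sum_probFrom_mul_lastSA (M : MDP S A) (π : S → A → ℝ) (s : S) (a : A) (t : ℕ)
    (f : S × A → ℝ) :
    ∑ h : Hist S A t, probFrom M π s a t h * f (lastSA h) =
      Pi.single (s, a) 1 ⬝ᵥ pairKernel M π ^ t *ᵥ f := by
  rw [← sum_paths_eq_dotProduct_pow_mulVec]
  simp only [Pi.single_apply, pairKernel_apply, probFrom, lastSA]

omit [DecidableEq A] in
lemma tsum_discounted_sum_prob (hπ : IsPolicy π) (f : S × A → ℝ) :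
    ∑' t : ℕ, M.γ ^ t * ∑ h : Hist S A t, prob M π t h * f (lastSA h) =
      M.μ0 ⬝ᵥ potential M.γ (stateKernel M π) *ᵥ policyMatrix π *ᵥ f := by
  classical
  simp only [sum_prob_mul_lastSA]
  rw [tsum_dotProduct_pow_mulVec (hπ.norm_γ_smul_pairKernel_lt_one M), ← Matrix.dotProduct_mulVec,
    policyMatrix_mulVec_potential hπ]

lemma uncurry_Qval_eq (hπ : IsPolicy π) :
    Function.uncurry (Qval M π) =
      potential M.γ (pairKernel M π) *ᵥ Function.uncurry M.r := by
  ext ⟨s, a⟩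
  have hsum := tsum_dotProduct_pow_mulVec (hπ.norm_γ_smul_pairKernel_lt_one M)
    (Pi.single (s, a) 1) (Function.uncurry M.r)
  simp only [← sum_probFrom_mul_lastSA] at hsum
  exact hsum.trans (single_one_dotProduct _ _)

lemma Vval_eq_mulVec (M : MDP S A) (π : S → A → ℝ) :
    Vval M π = policyMatrix π *ᵥ Function.uncurry (Qval M π) := by
  ext s
  simp only [Vval, policyMatrix_mulVec_apply, Function.uncurry_apply_pair]

lemma uncurry_Adv_eq (M : MDP S A) (π : S → A → ℝ) :
    Function.uncurry (Adv M π) = Function.uncurry (Qval M π) - Vval M π ∘ Prod.fst := rfl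

omit [DecidableEq A] in
lemma ηval_eq_dotProduct (hπ : IsPolicy π) :
    ηval M π = M.μ0 ⬝ᵥ
      potential M.γ (stateKernel M π) *ᵥ policyMatrix π *ᵥ Function.uncurry M.r :=
  tsum_discounted_sum_prob hπ (Function.uncurry M.r)

lemma ηval_eq_dotProduct_Vval (hπ : IsPolicy π) : ηval M π = M.μ0 ⬝ᵥ Vval M π := by
  rw [ηval_eq_dotProduct hπ, Vval_eq_mulVec, uncurry_Qval_eq hπ, policyMatrix_mulVec_potential hπ]

omit [DecidableEq A] in
lemma dOcc_eq_vecMul (hπ : IsPolicy π) :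
    dOcc M π = (1 - M.γ) • (M.μ0 ᵥ* potential M.γ (stateKernel M π)) := by
  ext s
  have average_indicator :
      policyMatrix π *ᵥ (fun q : S × A => if q.1 = s then (1 : ℝ) else 0) = Pi.single s 1 := by
    rw [← hπ.policyMatrix_mulVec_comp_fst (Pi.single s 1)]
    congr 1 with q
    exact (Pi.single_apply s 1 q.1).symm
  rw [dOcc, tsum_discounted_sum_prob hπ fun q => if q.1 = s then 1 else 0, average_indicator,
    Matrix.dotProduct_mulVec, dotProduct_single_one, Pi.smul_apply, smul_eq_mul]

lemma bellman_equation (hπ : IsPolicy π) :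
    Function.uncurry (Qval M π) =
      Function.uncurry M.r + M.γ • (transitionMatrix M *ᵥ Vval M π) := by
  have hresolvent : (1 - M.γ • pairKernel M π) *ᵥ Function.uncurry (Qval M π) =
      Function.uncurry M.r := by
    rw [uncurry_Qval_eq hπ, Matrix.mulVec_mulVec,
      one_sub_mul_potential (hπ.norm_γ_smul_pairKernel_lt_one M), Matrix.one_mulVec]
  rw [← hresolvent, Vval_eq_mulVec, Matrix.mulVec_mulVec, Matrix.sub_mulVec, Matrix.one_mulVec,
    Matrix.smul_mulVec, pairKernel, sub_add_cancel]

lemma policyMatrix_mulVec_Adv_self (hπ : IsPolicy π) :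
    policyMatrix π *ᵥ Function.uncurry (Adv M π) = 0 := by
  rw [uncurry_Adv_eq, Matrix.mulVec_sub, ← Vval_eq_mulVec, hπ.policyMatrix_mulVec_comp_fst,
    sub_self]

lemma policyMatrix_mulVec_Adv (hπ : IsPolicy π) (hπ' : IsPolicy π') :
    policyMatrix π' *ᵥ Function.uncurry (Adv M π) =
      policyMatrix π' *ᵥ Function.uncurry M.r -
        (1 - M.γ • stateKernel M π') *ᵥ Vval M π := by
  rw [uncurry_Adv_eq, Matrix.mulVec_sub, hπ'.policyMatrix_mulVec_comp_fst, bellman_equation hπ,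
    Matrix.mulVec_add, Matrix.mulVec_smul, Matrix.mulVec_mulVec, Matrix.sub_mulVec,
    Matrix.one_mulVec, Matrix.smul_mulVec, stateKernel]
  abel

lemma performance_difference (hπ : IsPolicy π) (hπ' : IsPolicy π') :
    ηval M π' - ηval M π = M.μ0 ⬝ᵥ
      potential M.γ (stateKernel M π') *ᵥ policyMatrix π' *ᵥ Function.uncurry (Adv M π) := by
  rw [policyMatrix_mulVec_Adv hπ hπ', Matrix.mulVec_sub, dotProduct_sub, ← ηval_eq_dotProduct hπ',
    Matrix.mulVec_mulVec, potential_mul_one_sub (hπ'.norm_γ_smul_stateKernel_lt_one M),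
    Matrix.one_mulVec, ηval_eq_dotProduct_Vval hπ]

lemma Lsur_eq_dotProduct (hπ : IsPolicy π) (π' : S → A → ℝ) :
    Lsur M π π' = M.μ0 ⬝ᵥ
      potential M.γ (stateKernel M π) *ᵥ policyMatrix π' *ᵥ Function.uncurry (Adv M π) := by
  have hγ : 1 - M.γ ≠ 0 := (sub_pos.mpr M.γ_lt_one).ne'
  calc Lsur M π π'
      = (1 - M.γ)⁻¹ * (dOcc M π ⬝ᵥ policyMatrix π' *ᵥ Function.uncurry (Adv M π)) := by
        simp only [Lsur, dotProduct, policyMatrix_mulVec_apply, Function.uncurry_apply_pair]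
    _ = _ := by
        rw [dOcc_eq_vecMul hπ, smul_dotProduct, smul_eq_mul, inv_mul_cancel_left₀ hγ,
          ← Matrix.dotProduct_mulVec]

lemma surrogate_error_eq (hπ : IsPolicy π) (hπ' : IsPolicy π') :
    ηval M π' - ηval M π - Lsur M π π' =
      M.μ0 ⬝ᵥ (M.γ • (potential M.γ (stateKernel M π') *
        (policyMatrix (π' - π) * transitionMatrix M) * potential M.γ (stateKernel M π))) *ᵥ
          policyMatrix (π' - π) *ᵥ Function.uncurry (Adv M π) := by
  have hAdv : policyMatrix π' *ᵥ Function.uncurry (Adv M π) =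
      policyMatrix (π' - π) *ᵥ Function.uncurry (Adv M π) := by
    rw [policyMatrix_sub, Matrix.sub_mulVec, policyMatrix_mulVec_Adv_self hπ, sub_zero]
  rw [performance_difference hπ hπ', Lsur_eq_dotProduct hπ, ← dotProduct_sub, ← Matrix.sub_mulVec,
    potential_sub_potential (hπ'.norm_γ_smul_stateKernel_lt_one M)
      (hπ.norm_γ_smul_stateKernel_lt_one M),
    stateKernel, stateKernel, ← Matrix.sub_mul, ← policyMatrix_sub, hAdv]

lemma abs_surrogate_error_le_norm [Nonempty S] (hπ : IsPolicy π) (hπ' : IsPolicy π') :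
    |ηval M π' - ηval M π - Lsur M π π'| ≤
      M.γ / (1 - M.γ) ^ 2 * ‖policyMatrix (π' - π)‖ ^ 2 * ‖Function.uncurry (Adv M π)‖ := by
  have hγ := M.γ_pos.le
  have h1γ : 0 ≤ (1 - M.γ)⁻¹ := inv_nonneg.mpr (sub_nonneg.mpr M.γ_lt_one.le)
  set D := policyMatrix (π' - π)
  set N := potential M.γ (stateKernel M π)
  set N' := potential M.γ (stateKernel M π')
  have hN : ‖N‖ ≤ (1 - M.γ)⁻¹ :=
    norm_potential_le hγ M.γ_lt_one (hπ.norm_stateKernel_le M)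
  have hN' : ‖N'‖ ≤ (1 - M.γ)⁻¹ :=
    norm_potential_le hγ M.γ_lt_one (hπ'.norm_stateKernel_le M)
  have hkernel : ‖D * transitionMatrix M‖ ≤ ‖D‖ :=
    (Matrix.linfty_opNorm_mul _ _).trans <|
      mul_le_of_le_one_right (norm_nonneg _) (norm_transitionMatrix_le M)
  have hpotential : ‖M.γ • (N' * (D * transitionMatrix M) * N)‖ ≤
      M.γ * ((1 - M.γ)⁻¹ * ‖D‖ * (1 - M.γ)⁻¹) := by
    rw [norm_smul, Real.norm_of_nonneg hγ]
    gcongr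
    refine (norm_mul_le _ _).trans ?_
    gcongr
    refine (norm_mul_le _ _).trans ?_
    gcongr
  calc |ηval M π' - ηval M π - Lsur M π π'|
      ≤ ‖(M.γ • (N' * (D * transitionMatrix M) * N)) *ᵥ D *ᵥ Function.uncurry (Adv M π)‖ := by
        rw [surrogate_error_eq hπ hπ']
        exact abs_dotProduct_le_norm M.μ0_nonneg M.μ0_sum_one _
    _ ≤ ‖M.γ • (N' * (D * transitionMatrix M) * N)‖ * (‖D‖ * ‖Function.uncurry (Adv M π)‖) := by
        refine (Matrix.linfty_opNorm_mulVec _ _).trans ?_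
        gcongr
        exact Matrix.linfty_opNorm_mulVec _ _
    _ ≤ M.γ * ((1 - M.γ)⁻¹ * ‖D‖ * (1 - M.γ)⁻¹) * (‖D‖ * ‖Function.uncurry (Adv M π)‖) := by
        gcongr
    _ = M.γ / (1 - M.γ) ^ 2 * ‖D‖ ^ 2 * ‖Function.uncurry (Adv M π)‖ := by
        rw [div_eq_mul_inv, ← inv_pow]
        ring

end Values

/-- TRPO style bound: `|η(π̃) − η(π) − L_π(π̃)| ≤ (4εγ/(1−γ)²) Δ²` with
`ε = max_{s,a} |A^π(s,a)|` and `Δ = max_s D_TV(π̃(·|s)‖π(·|s))`. -/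
theorem surrogate_error_bound_max_TV
    [Nonempty S] [Nonempty A]
    (M : MDP S A) (π π' : S → A → ℝ)
    (hπ : IsPolicy π) (hπ' : IsPolicy π')
    (ε : ℝ)
    (hε : ε = Finset.univ.sup' Finset.univ_nonempty fun q : S × A => |Adv M π q.1 q.2|)
    (Δ : ℝ)
    (hΔ : Δ = Finset.univ.sup' Finset.univ_nonempty fun s => (1 / 2) * ∑ a, |π' s a - π s a|) :
    |ηval M π' - ηval M π - Lsur M π π'| ≤ 4 * ε * M.γ / (1 - M.γ) ^ 2 * Δ ^ 2 := by
  have hAdv_le (s : S) (a : A) : |Adv M π s a| ≤ ε :=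
    hε ▸ Finset.le_sup' (fun q : S × A => |Adv M π q.1 q.2|) (Finset.mem_univ (s, a))
  have hTV_le (s : S) : (1 / 2) * ∑ a, |π' s a - π s a| ≤ Δ :=
    hΔ ▸ Finset.le_sup' (fun s => (1 / 2) * ∑ a, |π' s a - π s a|) (Finset.mem_univ s)
  have hε_nonneg : 0 ≤ ε :=
    (abs_nonneg _).trans (hAdv_le (Classical.arbitrary S) (Classical.arbitrary A))
  have hΔ_nonneg : 0 ≤ Δ := le_trans (by positivity) (hTV_le (Classical.arbitrary S))
  have hAdv_norm : ‖Function.uncurry (Adv M π)‖ ≤ ε :=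
    (pi_norm_le_iff_of_nonneg hε_nonneg).mpr fun q => hAdv_le q.1 q.2
  have hπ_norm : ‖policyMatrix (π' - π)‖ ≤ 2 * Δ :=
    norm_policyMatrix_le_of_sum_abs_le (by positivity) fun s => by
      simp only [Pi.sub_apply]
      linarith [hTV_le s]
  have hcoef : 0 ≤ M.γ / (1 - M.γ) ^ 2 := div_nonneg M.γ_pos.le (sq_nonneg _)
  calc |ηval M π' - ηval M π - Lsur M π π'|
      ≤ M.γ / (1 - M.γ) ^ 2 * ‖policyMatrix (π' - π)‖ ^ 2 * ‖Function.uncurry (Adv M π)‖ :=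
        abs_surrogate_error_le_norm hπ hπ'
    _ ≤ M.γ / (1 - M.γ) ^ 2 * (2 * Δ) ^ 2 * ε := by gcongr
    _ = 4 * ε * M.γ / (1 - M.γ) ^ 2 * Δ ^ 2 := by ring

end PolicyOpt
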